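/- arXiv:math/0306352 — 20 statements merged into one kernel-verified Lean document; each statement's English description precedes it below -/
import Mathlib

section
/- Let H be an inner product space over 𝕜 (𝕜 = ℝ or ℂ) and let a, A ∈ 𝕜 satisfy Re(conj(a)·A) > 0. If x, y ∈ H satisfy Re⟨A·y − x, x − a·y⟩ ≥ 0, then ‖x‖·‖y‖ ≤ (1/2)·Re[A·conj(⟨x,y⟩) + conj(a)·⟨x,y⟩] / (Re(conj(a)·A))^(1/2), and this quantity is in turn ≤ (1/2)·(|A| + |a|) / (Re(conj(a)·A))^(1/2) · |⟨x,y⟩|. -/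
open RCLike ComplexConjugate

/-- Theorem 2.1 (reverse of Schwarz's inequality).  Here the inner product
`⟪·,·⟫` is Mathlib's (conjugate-linear in the first variable), so the paper's
`⟨x,y⟩` is written `⟪y, x⟫`. -/
theorem reverse_schwarz_inequality {𝕜 H : Type*} [RCLike 𝕜] [NormedAddCommGroup H]
    [InnerProductSpace 𝕜 H] (a A : 𝕜) (ha : 0 < re (conj a * A)) (x y : H)
    (h : 0 ≤ re (@inner 𝕜 _ _ (A • y - x) (x - a • y))) :
    ‖x‖ * ‖y‖ ≤
        1 / 2 * re (A * conj (@inner 𝕜 _ _ y x) + conj a * @inner 𝕜 _ _ y x) /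
          Real.sqrt (re (conj a * A)) ∧
      1 / 2 * re (A * conj (@inner 𝕜 _ _ y x) + conj a * @inner 𝕜 _ _ y x) /
          Real.sqrt (re (conj a * A)) ≤
        1 / 2 * ((‖A‖ + ‖a‖) / Real.sqrt (re (conj a * A))) * ‖@inner 𝕜 _ _ y x‖ := by
  have hs : 0 < Real.sqrt (re (conj a * A)) := Real.sqrt_pos.mpr ha
  have hsq : Real.sqrt (re (conj a * A)) ^ 2 = re (conj a * A) := Real.sq_sqrt ha.le
  have key : re (@inner 𝕜 _ _ (A • y - x) (x - a • y)) =
      re (A * conj (@inner 𝕜 _ _ y x) + conj a * @inner 𝕜 _ _ y x)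
        - re (conj a * A) * ‖y‖ ^ 2 - ‖x‖ ^ 2 := by
    have hx : re (@inner 𝕜 _ _ x y) = re (@inner 𝕜 _ _ y x) := inner_re_symm x y
    have hi : im (@inner 𝕜 _ _ x y) = - im (@inner 𝕜 _ _ y x) := inner_im_symm x y
    have hxx : re (@inner 𝕜 _ _ x x) = ‖x‖ ^ 2 := inner_self_eq_norm_sq x
    have hyy : re (@inner 𝕜 _ _ y y) = ‖y‖ ^ 2 := inner_self_eq_norm_sq y
    have hyi : im (@inner 𝕜 _ _ y y) = 0 := inner_self_im y
    simp only [inner_sub_left, inner_sub_right, inner_smul_left, inner_smul_right, map_sub,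
      map_add, mul_re, mul_im, conj_re, conj_im, hx, hi, hxx, hyy, hyi]
    ring
  rw [key] at h
  have hR : re (A * conj (@inner 𝕜 _ _ y x) + conj a * @inner 𝕜 _ _ y x) ≤
      (‖A‖ + ‖a‖) * ‖@inner 𝕜 _ _ y x‖ := by
    refine (re_le_norm _).trans ((norm_add_le _ _).trans (le_of_eq ?_))
    rw [norm_mul, norm_mul, norm_conj, norm_conj]
    ring
  generalize re (A * conj (@inner 𝕜 _ _ y x) + conj a * @inner 𝕜 _ _ y x) = R at *
  constructor
  · rw [le_div_iff₀ hs]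
    rw [← hsq] at h
    nlinarith [sq_nonneg (‖x‖ - Real.sqrt (re (conj a * A)) * ‖y‖)]
  · calc 1 / 2 * R / Real.sqrt (re (conj a * A))
        ≤ 1 / 2 * ((‖A‖ + ‖a‖) * ‖@inner 𝕜 _ _ y x‖) / Real.sqrt (re (conj a * A)) := by gcongr
      _ = _ := by ring
end

section
/- Let H be an inner product space over 𝕜 (𝕜 = ℝ or ℂ) containing a nonzero vector, and let c > 0 be a constant such that for all a, A ∈ 𝕜 with Re(conj(a)·A) > 0 and all x, y ∈ H with Re⟨A·y − x, x − a·y⟩ ≥ 0 one has ‖x‖·‖y‖ ≤ c·Re[A·conj(⟨x,y⟩) + conj(a)·⟨x,y⟩] / (Re(conj(a)·A))^(1/2). Then c ≥ 1/2 (i.e., the constant 1/2 in the previous reverse Schwarz inequality is sharp). -/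
open RCLike ComplexConjugate

/-- Sharpness of the constant `1/2` in the reverse Schwarz inequality of Theorem 2.1.
The inner product `⟪·,·⟫` is Mathlib's (conjugate-linear in the first variable), so the
paper's `⟨x,y⟩` is written as `inner y x`. -/
theorem reverse_schwarz_constant_sharp {𝕜 H : Type*} [RCLike 𝕜] [NormedAddCommGroup H]
    [InnerProductSpace 𝕜 H] (hH : ∃ z : H, z ≠ 0) (c : ℝ) (hc : 0 < c)
    (h : ∀ (a A : 𝕜) (x y : H), 0 < re (conj a * A) →
      0 ≤ re (@inner 𝕜 _ _ (A • y - x) (x - a • y)) →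
      ‖x‖ * ‖y‖ ≤
        c * re (A * conj (@inner 𝕜 _ _ y x) + conj a * @inner 𝕜 _ _ y x) /
          Real.sqrt (re (conj a * A))) :
    1 / 2 ≤ c := by
  obtain ⟨z, hz⟩ := hH
  have h1 := h 1 1 z z (by simp) (by simp)
  have hn : 0 < ‖z‖ := norm_pos_iff.mpr hz
  have h2 : re (@inner 𝕜 _ _ z z) = ‖z‖ * ‖z‖ := inner_self_eq_norm_mul_norm z
  simp only [map_one, one_mul, map_add, RCLike.conj_re, h2, RCLike.one_re, Real.sqrt_one,
    div_one] at h1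
  have h3 : 0 < ‖z‖ * ‖z‖ := mul_pos hn hn
  by_contra hlt
  push Not at hlt
  nlinarith
end

section
/- Let H be an inner product space over 𝕜 (𝕜 = ℝ or ℂ) and let m, M > 0 be real numbers. If x, y ∈ H satisfy Re⟨M·y − x, x − m·y⟩ ≥ 0, then ‖x‖·‖y‖ ≤ (1/2)·(M + m)/√(m·M) · Re⟨x,y⟩ ≤ (1/2)·(M + m)/√(m·M) · |⟨x,y⟩|. -/
open RCLike

/-- Corollary 2.2.  The inner product is Mathlib's (conjugate-linear in the first
variable), so the paper's `⟨x,y⟩` is written as `inner y x`. -/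
theorem cassels_inner_product {𝕜 H : Type*} [RCLike 𝕜] [NormedAddCommGroup H]
    [InnerProductSpace 𝕜 H] (m M : ℝ) (hm : 0 < m) (hM : 0 < M) (x y : H)
    (h : 0 ≤ re (@inner 𝕜 _ _ ((M : 𝕜) • y - x) (x - (m : 𝕜) • y))) :
    ‖x‖ * ‖y‖ ≤ 1 / 2 * ((M + m) / Real.sqrt (m * M)) * re (@inner 𝕜 _ _ y x) ∧
      1 / 2 * ((M + m) / Real.sqrt (m * M)) * re (@inner 𝕜 _ _ y x) ≤
        1 / 2 * ((M + m) / Real.sqrt (m * M)) * ‖@inner 𝕜 _ _ y x‖ := by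
  have hs : 0 < Real.sqrt (m * M) := Real.sqrt_pos.mpr (mul_pos hm hM)
  have hs2 : Real.sqrt (m * M) * Real.sqrt (m * M) = m * M :=
    Real.mul_self_sqrt (mul_pos hm hM).le
  have key : re (@inner 𝕜 _ _ ((M : 𝕜) • y - x) (x - (m : 𝕜) • y)) =
      (M + m) * re (@inner 𝕜 _ _ y x) - ‖x‖ ^ 2 - m * M * ‖y‖ ^ 2 := by
    have e1 : re (@inner 𝕜 _ _ x y) = re (@inner 𝕜 _ _ y x) := inner_re_symm x y
    have e2 : re (@inner 𝕜 _ _ x x) = ‖x‖ ^ 2 := inner_self_eq_norm_sq x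
    have e3 : re (@inner 𝕜 _ _ y y) = ‖y‖ ^ 2 := inner_self_eq_norm_sq y
    simp only [inner_sub_left, inner_sub_right, inner_smul_left, inner_smul_right,
      conj_ofReal, map_sub, re_ofReal_mul, e1, e2, e3]
    ring
  rw [key] at h
  set s := Real.sqrt (m * M)
  refine ⟨?_, ?_⟩
  · have : 1 / 2 * ((M + m) / s) * re (@inner 𝕜 _ _ y x) =
        ((M + m) * re (@inner 𝕜 _ _ y x)) / (2 * s) := by field_simp
    rw [this, le_div_iff₀ (by positivity)]
    rw [← hs2] at h
    nlinarith [sq_nonneg (‖x‖ - s * ‖y‖)]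
  · have := re_le_norm (@inner 𝕜 _ _ y x)
    gcongr
end

section
/- Let H be an inner product space over 𝕜 (𝕜 = ℝ or ℂ) and let m, M > 0 be real numbers. If x, y ∈ H satisfy Re⟨M·y − x, x − m·y⟩ ≥ 0, then 0 ≤ ‖x‖·‖y‖ − |⟨x,y⟩| ≤ ‖x‖·‖y‖ − Re⟨x,y⟩ ≤ (√M − √m)²/(2√(m·M)) · Re⟨x,y⟩ ≤ (√M − √m)²/(2√(m·M)) · |⟨x,y⟩|. -/
open RCLike

/-- Corollary 2.3, inequality (2.8).  The inner product is Mathlib's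
(conjugate-linear in the first variable), so the paper's `⟨x,y⟩` is written as
`inner y x`. -/
theorem cassels_inner_product_additive {𝕜 H : Type*} [RCLike 𝕜] [NormedAddCommGroup H]
    [InnerProductSpace 𝕜 H] (m M : ℝ) (hm : 0 < m) (hM : 0 < M) (x y : H)
    (h : 0 ≤ re (@inner 𝕜 _ _ ((M : 𝕜) • y - x) (x - (m : 𝕜) • y))) :
    0 ≤ ‖x‖ * ‖y‖ - ‖@inner 𝕜 _ _ y x‖ ∧
      ‖x‖ * ‖y‖ - ‖@inner 𝕜 _ _ y x‖ ≤ ‖x‖ * ‖y‖ - re (@inner 𝕜 _ _ y x) ∧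
      ‖x‖ * ‖y‖ - re (@inner 𝕜 _ _ y x) ≤
        (Real.sqrt M - Real.sqrt m) ^ 2 / (2 * Real.sqrt (m * M)) * re (@inner 𝕜 _ _ y x) ∧
      (Real.sqrt M - Real.sqrt m) ^ 2 / (2 * Real.sqrt (m * M)) * re (@inner 𝕜 _ _ y x) ≤
        (Real.sqrt M - Real.sqrt m) ^ 2 / (2 * Real.sqrt (m * M)) * ‖@inner 𝕜 _ _ y x‖ := by
  have hre : re (@inner 𝕜 _ _ y x) ≤ ‖@inner 𝕜 _ _ y x‖ := re_le_norm _
  have key : ‖x‖ ^ 2 + m * M * ‖y‖ ^ 2 ≤ (M + m) * re (@inner 𝕜 _ _ y x) := by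
    have e1 : re (@inner 𝕜 _ _ x y) = re (@inner 𝕜 _ _ y x) := inner_re_symm _ _
    have e2 : re (@inner 𝕜 _ _ x x) = ‖x‖ ^ 2 := inner_self_eq_norm_sq x
    have e3 : re (@inner 𝕜 _ _ y y) = ‖y‖ ^ 2 := inner_self_eq_norm_sq y
    simp only [inner_sub_left, inner_sub_right, inner_smul_left, inner_smul_right, conj_ofReal,
      map_sub, re_ofReal_mul, e1, e2, e3] at h
    linarith
  have hc : 0 ≤ (Real.sqrt M - Real.sqrt m) ^ 2 / (2 * Real.sqrt (m * M)) := by positivity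
  refine ⟨?_, by linarith, ?_, mul_le_mul_of_nonneg_left hre hc⟩
  · have := norm_inner_le_norm (𝕜 := 𝕜) y x
    linarith [mul_comm ‖x‖ ‖y‖]
  · rw [Real.sqrt_mul hm.le]
    have ha := Real.sqrt_pos.2 hM
    have hb := Real.sqrt_pos.2 hm
    have ha2 := Real.sq_sqrt hM.le
    have hb2 := Real.sq_sqrt hm.le
    generalize Real.sqrt M = a at *
    generalize Real.sqrt m = b at *
    subst ha2 hb2
    rw [div_mul_eq_mul_div, le_div_iff₀ (by positivity)]
    nlinarith [sq_nonneg (‖x‖ - b * a * ‖y‖)]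
end

section
/- Let H be an inner product space over 𝕜 (𝕜 = ℝ or ℂ) and let m, M > 0 be real numbers. If x, y ∈ H satisfy Re⟨M·y − x, x − m·y⟩ ≥ 0, then 0 ≤ ‖x‖²·‖y‖² − |⟨x,y⟩|² ≤ ‖x‖²·‖y‖² − (Re⟨x,y⟩)² ≤ (M − m)²/(4·m·M) · (Re⟨x,y⟩)² ≤ (M − m)²/(4·m·M) · |⟨x,y⟩|². -/
open RCLike

/-- Corollary 2.3, inequality (2.9).  The inner product is Mathlib's
(conjugate-linear in the first variable), so the paper's `⟨x,y⟩` is written as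
`inner y x`. -/
theorem cassels_inner_product_additive_squares {𝕜 H : Type*} [RCLike 𝕜] [NormedAddCommGroup H]
    [InnerProductSpace 𝕜 H] (m M : ℝ) (hm : 0 < m) (hM : 0 < M) (x y : H)
    (h : 0 ≤ re (@inner 𝕜 _ _ ((M : 𝕜) • y - x) (x - (m : 𝕜) • y))) :
    0 ≤ ‖x‖ ^ 2 * ‖y‖ ^ 2 - ‖@inner 𝕜 _ _ y x‖ ^ 2 ∧
      ‖x‖ ^ 2 * ‖y‖ ^ 2 - ‖@inner 𝕜 _ _ y x‖ ^ 2 ≤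
        ‖x‖ ^ 2 * ‖y‖ ^ 2 - re (@inner 𝕜 _ _ y x) ^ 2 ∧
      ‖x‖ ^ 2 * ‖y‖ ^ 2 - re (@inner 𝕜 _ _ y x) ^ 2 ≤
        (M - m) ^ 2 / (4 * m * M) * re (@inner 𝕜 _ _ y x) ^ 2 ∧
      (M - m) ^ 2 / (4 * m * M) * re (@inner 𝕜 _ _ y x) ^ 2 ≤
        (M - m) ^ 2 / (4 * m * M) * ‖@inner 𝕜 _ _ y x‖ ^ 2 := by
  have hr : re (@inner 𝕜 _ _ y x) ^ 2 ≤ ‖@inner 𝕜 _ _ y x‖ ^ 2 := by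
    rw [← sq_abs]
    exact pow_le_pow_left₀ (abs_nonneg _) (RCLike.abs_re_le_norm _) 2
  have hcs : ‖@inner 𝕜 _ _ y x‖ ^ 2 ≤ (‖y‖ * ‖x‖) ^ 2 :=
    pow_le_pow_left₀ (norm_nonneg _) (norm_inner_le_norm y x) 2
  have hsym : re (@inner 𝕜 _ _ x y) = re (@inner 𝕜 _ _ y x) := inner_re_symm x y
  have hxx : re (@inner 𝕜 _ _ x x) = ‖x‖ ^ 2 := (norm_sq_eq_re_inner x).symm
  have hyy : re (@inner 𝕜 _ _ y y) = ‖y‖ ^ 2 := (norm_sq_eq_re_inner y).symm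
  have key : ‖x‖ ^ 2 + m * M * ‖y‖ ^ 2 ≤ (M + m) * re (@inner 𝕜 _ _ y x) := by
    rw [inner_sub_left, inner_sub_right, inner_sub_right, inner_smul_left, inner_smul_left,
      inner_smul_right, inner_smul_right, RCLike.conj_ofReal] at h
    simp only [map_sub, RCLike.re_ofReal_mul, hsym, hxx, hyy] at h
    linarith
  have hc : 0 ≤ (M - m) ^ 2 / (4 * m * M) := by positivity
  refine ⟨by linarith [mul_pow ‖y‖ ‖x‖ 2], by linarith, ?_, mul_le_mul_of_nonneg_left hr hc⟩
  have h2 : (‖x‖ ^ 2 + m * M * ‖y‖ ^ 2) ^ 2 ≤ ((M + m) * re (@inner 𝕜 _ _ y x)) ^ 2 :=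
    pow_le_pow_left₀ (by positivity) key 2
  rw [div_mul_eq_mul_div, le_div_iff₀ (by positivity)]
  nlinarith [sq_nonneg (‖x‖ ^ 2 - m * M * ‖y‖ ^ 2)]
end

section
/- (Cassels' inequality) Let n ≥ 1, let a = (a₁,…,aₙ) and b = (b₁,…,bₙ) be sequences of positive real numbers, and let w = (w₁,…,wₙ) be a sequence of nonnegative real numbers. Set m = min over i of aᵢ/bᵢ and M = max over i of aᵢ/bᵢ. Then (Σᵢ wᵢ·aᵢ²)·(Σᵢ wᵢ·bᵢ²) ≤ (m + M)²/(4·m·M) · (Σᵢ wᵢ·aᵢ·bᵢ)². -/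
/-- Theorem 1.1 (Cassels' inequality). -/
theorem cassels_inequality (n : ℕ) (hn : 1 ≤ n) (a b w : Fin n → ℝ)
    (ha : ∀ i, 0 < a i) (hb : ∀ i, 0 < b i) (hw : ∀ i, 0 ≤ w i)
    (m M : ℝ) (hm : m = ⨅ i, a i / b i) (hM : M = ⨆ i, a i / b i) :
    (∑ i, w i * a i ^ 2) * (∑ i, w i * b i ^ 2) ≤
      (m + M) ^ 2 / (4 * m * M) * (∑ i, w i * a i * b i) ^ 2 := by
  haveI : Nonempty (Fin n) := ⟨⟨0, hn⟩⟩
  have hml : ∀ i, m ≤ a i / b i := fun i => by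
    rw [hm]; exact ciInf_le (Set.finite_range _).bddBelow i
  have hMl : ∀ i, a i / b i ≤ M := fun i => by
    rw [hM]; exact le_ciSup (f := fun i => a i / b i) (Set.finite_range _).bddAbove i
  have hm0 : 0 < m := by
    obtain ⟨i, hi⟩ := exists_eq_ciInf_of_finite (f := fun i => a i / b i)
    rw [hm, ← hi]; exact div_pos (ha i) (hb i)
  have hM0 : 0 < M := lt_of_lt_of_le hm0 ((hml ⟨0, hn⟩).trans (hMl ⟨0, hn⟩))
  have key : (∑ i, w i * a i ^ 2) + m * M * (∑ i, w i * b i ^ 2)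
      ≤ (m + M) * (∑ i, w i * a i * b i) := by
    rw [Finset.mul_sum, Finset.mul_sum, ← Finset.sum_add_distrib]
    apply Finset.sum_le_sum
    intro i _
    have h1 := (le_div_iff₀ (hb i)).1 (hml i)
    have h2 := (div_le_iff₀ (hb i)).1 (hMl i)
    have h3 := mul_nonneg (hw i) (mul_nonneg (sub_nonneg.2 h1) (sub_nonneg.2 h2))
    linarith
  have hA : 0 ≤ ∑ i, w i * a i ^ 2 :=
    Finset.sum_nonneg fun i _ => mul_nonneg (hw i) (sq_nonneg _)
  have hB : 0 ≤ ∑ i, w i * b i ^ 2 :=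
    Finset.sum_nonneg fun i _ => mul_nonneg (hw i) (sq_nonneg _)
  generalize (∑ i, w i * a i ^ 2) = A at *
  generalize (∑ i, w i * b i ^ 2) = B at *
  generalize (∑ i, w i * a i * b i) = C at *
  rw [div_mul_eq_mul_div, le_div_iff₀ (by positivity)]
  have h4 := pow_le_pow_left₀ (by positivity) key 2
  linarith [sq_nonneg (A - m * M * B)]
end

section
/- (Greub–Reinboldt inequality) Let n ≥ 1, let (a₁,…,aₙ), (b₁,…,bₙ) be real sequences, (w₁,…,wₙ) a sequence of nonnegative reals, and let 0 < a ≤ A and 0 < b ≤ B be real constants such that a ≤ aᵢ ≤ A and b ≤ bᵢ ≤ B for each i. Then (Σᵢ wᵢ·aᵢ²)·(Σᵢ wᵢ·bᵢ²) ≤ (a·b + A·B)²/(4·a·b·A·B) · (Σᵢ wᵢ·aᵢ·bᵢ)². -/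
/-- Inequality (1.3) (Greub–Reinboldt's inequality). -/
theorem greub_reinboldt_inequality (n : ℕ) (hn : 1 ≤ n) (a' b' w : Fin n → ℝ)
    (hw : ∀ i, 0 ≤ w i) (a A b B : ℝ) (ha : 0 < a) (haA : a ≤ A) (hb : 0 < b) (hbB : b ≤ B)
    (h1 : ∀ i, a ≤ a' i ∧ a' i ≤ A) (h2 : ∀ i, b ≤ b' i ∧ b' i ≤ B) :
    (∑ i, w i * a' i ^ 2) * (∑ i, w i * b' i ^ 2) ≤
      (a * b + A * B) ^ 2 / (4 * a * b * A * B) * (∑ i, w i * a' i * b' i) ^ 2 := by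
  have hA : 0 < A := lt_of_lt_of_le ha haA
  have hB : 0 < B := lt_of_lt_of_le hb hbB
  have key : b * B * (∑ i, w i * a' i ^ 2) + a * A * (∑ i, w i * b' i ^ 2) ≤
      (a * b + A * B) * ∑ i, w i * a' i * b' i := by
    rw [Finset.mul_sum, Finset.mul_sum, Finset.mul_sum, ← Finset.sum_add_distrib]
    apply Finset.sum_le_sum
    intro i _
    obtain ⟨h3, h4⟩ := h1 i
    obtain ⟨h5, h6⟩ := h2 i
    have e1 : 0 ≤ B * a' i - a * b' i := by
      nlinarith [mul_le_mul_of_nonneg_left h3 hB.le, mul_le_mul_of_nonneg_left h6 ha.le]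
    have e2 : 0 ≤ A * b' i - b * a' i := by
      nlinarith [mul_le_mul_of_nonneg_left h5 hA.le, mul_le_mul_of_nonneg_left h4 hb.le]
    have e3 := mul_nonneg (hw i) (mul_nonneg e1 e2)
    linarith [e3]
  have hP : 0 ≤ ∑ i, w i * a' i ^ 2 :=
    Finset.sum_nonneg fun i _ => mul_nonneg (hw i) (sq_nonneg _)
  have hQ : 0 ≤ ∑ i, w i * b' i ^ 2 :=
    Finset.sum_nonneg fun i _ => mul_nonneg (hw i) (sq_nonneg _)
  generalize (∑ i, w i * a' i ^ 2) = P at *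
  generalize (∑ i, w i * b' i ^ 2) = Q at *
  generalize (∑ i, w i * a' i * b' i) = S at *
  have hsq := pow_le_pow_left₀ (by positivity) key 2
  rw [div_mul_eq_mul_div, le_div_iff₀ (by positivity)]
  linarith [sq_nonneg (b * B * P - a * A * Q)]
end

section
/- (Unweighted Cassels' inequality) Let n ≥ 1 and let a = (a₁,…,aₙ), b = (b₁,…,bₙ) be sequences of positive real numbers. Set m = min over i of aᵢ/bᵢ and M = max over i of aᵢ/bᵢ. Then (Σᵢ aᵢ²)·(Σᵢ bᵢ²) ≤ (m + M)²/(4·m·M) · (Σᵢ aᵢ·bᵢ)². -/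
/-- Inequality (1.4) (unweighted Cassels' inequality). -/
theorem unweighted_cassels_inequality (n : ℕ) (hn : 1 ≤ n) (a b : Fin n → ℝ)
    (ha : ∀ i, 0 < a i) (hb : ∀ i, 0 < b i)
    (m M : ℝ) (hm : m = ⨅ i, a i / b i) (hM : M = ⨆ i, a i / b i) :
    (∑ i, a i ^ 2) * (∑ i, b i ^ 2) ≤
      (m + M) ^ 2 / (4 * m * M) * (∑ i, a i * b i) ^ 2 := by
  haveI : Nonempty (Fin n) := ⟨⟨0, hn⟩⟩
  have hml : ∀ i, m ≤ a i / b i := fun i => hm ▸ ciInf_le (Set.finite_range _).bddBelow i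
  have hMl : ∀ i, a i / b i ≤ M := fun i =>
    hM ▸ le_ciSup (f := fun i => a i / b i) (Set.finite_range _).bddAbove i
  have hm0 : 0 < m := by
    obtain ⟨i, hi⟩ := exists_eq_ciInf_of_finite (f := fun i => a i / b i)
    rw [hm, ← hi]
    exact div_pos (ha i) (hb i)
  have hM0 : 0 < M := lt_of_lt_of_le hm0 ((hml ⟨0, hn⟩).trans (hMl _))
  have key : (∑ i, a i ^ 2) + m * M * (∑ i, b i ^ 2) ≤ (m + M) * ∑ i, a i * b i := by
    rw [Finset.mul_sum, Finset.mul_sum, ← Finset.sum_add_distrib]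
    refine Finset.sum_le_sum fun i _ => ?_
    have h1 := (le_div_iff₀ (hb i)).1 (hml i)
    have h2 := (div_le_iff₀ (hb i)).1 (hMl i)
    nlinarith [mul_nonneg (sub_nonneg.2 h1) (sub_nonneg.2 h2)]
  have hA : 0 ≤ ∑ i, a i ^ 2 := Finset.sum_nonneg fun i _ => sq_nonneg _
  have hB : 0 ≤ ∑ i, b i ^ 2 := Finset.sum_nonneg fun i _ => sq_nonneg _
  generalize (∑ i, a i ^ 2) = A at *
  generalize (∑ i, b i ^ 2) = B at *
  generalize (∑ i, a i * b i) = C at *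
  rw [div_mul_eq_mul_div, le_div_iff₀ (by positivity)]
  have h0 : 0 ≤ A + m * M * B := by positivity
  have h3 := pow_le_pow_left₀ h0 key 2
  nlinarith [sq_nonneg (A - m * M * B)]
end

section
/- (Pólya–Szegő inequality) Let n ≥ 1, let (a₁,…,aₙ), (b₁,…,bₙ) be real sequences, and let 0 < a ≤ A and 0 < b ≤ B be real constants such that a ≤ aᵢ ≤ A and b ≤ bᵢ ≤ B for each i. Then (Σᵢ aᵢ²)·(Σᵢ bᵢ²) ≤ (a·b + A·B)²/(4·a·b·A·B) · (Σᵢ aᵢ·bᵢ)². -/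
/-- Inequality (1.5) (Pólya–Szegő's inequality). -/
theorem polya_szego_inequality (n : ℕ) (hn : 1 ≤ n) (a' b' : Fin n → ℝ)
    (a A b B : ℝ) (ha : 0 < a) (haA : a ≤ A) (hb : 0 < b) (hbB : b ≤ B)
    (h1 : ∀ i, a ≤ a' i ∧ a' i ≤ A) (h2 : ∀ i, b ≤ b' i ∧ b' i ≤ B) :
    (∑ i, a' i ^ 2) * (∑ i, b' i ^ 2) ≤
      (a * b + A * B) ^ 2 / (4 * a * b * A * B) * (∑ i, a' i * b' i) ^ 2 := by
  have hA : 0 < A := ha.trans_le haA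
  have hB : 0 < B := hb.trans_le hbB
  have key : b * B * (∑ i, a' i ^ 2) + a * A * (∑ i, b' i ^ 2) ≤
      (a * b + A * B) * (∑ i, a' i * b' i) := by
    rw [Finset.mul_sum, Finset.mul_sum, Finset.mul_sum, ← Finset.sum_add_distrib]
    apply Finset.sum_le_sum
    intro i _
    obtain ⟨h3, h4⟩ := h1 i
    obtain ⟨h5, h6⟩ := h2 i
    have e1 : 0 ≤ B * a' i - a * b' i := by
      have := mul_le_mul h3 h6 (hb.le.trans h5) (ha.le.trans h3)
      linarith
    have e2 : 0 ≤ A * b' i - b * a' i := by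
      have := mul_le_mul h4 h5 hb.le hA.le
      linarith
    nlinarith [mul_nonneg e1 e2]
  have hX : 0 ≤ ∑ i, a' i ^ 2 := Finset.sum_nonneg fun i _ => sq_nonneg _
  have hY : 0 ≤ ∑ i, b' i ^ 2 := Finset.sum_nonneg fun i _ => sq_nonneg _
  generalize (∑ i, a' i ^ 2) = X at *
  generalize (∑ i, b' i ^ 2) = Y at *
  generalize (∑ i, a' i * b' i) = S at *
  rw [div_mul_eq_mul_div, le_div_iff₀ (by positivity)]
  have h0 : 0 ≤ b * B * X + a * A * Y := by positivity
  have := pow_le_pow_left₀ h0 key 2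
  nlinarith [sq_nonneg (b * B * X - a * A * Y)]
end

section
/- (Niculescu's inequality) Let E be an inner product space over 𝕜 (𝕜 = ℝ or ℂ), let x, y ∈ E and let ω, Ω > 0 be real numbers such that Re⟨x − ω·y, x − Ω·y⟩ ≤ 0. Then (√(ω/Ω) + √(Ω/ω)) · Re⟨x,y⟩ ≥ 2·‖x‖·‖y‖. -/
open RCLike

/-- Theorem 1.2 (Niculescu's inequality).  The inner product is Mathlib's
(conjugate-linear in the first variable); since only real parts appear this
agrees with the paper's convention. -/
theorem niculescu_inequality {𝕜 E : Type*} [RCLike 𝕜] [NormedAddCommGroup E]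
    [InnerProductSpace 𝕜 E] (x y : E) (ω Ω : ℝ) (hω : 0 < ω) (hΩ : 0 < Ω)
    (h : re (@inner 𝕜 _ _ (x - (ω : 𝕜) • y) (x - (Ω : 𝕜) • y)) ≤ 0) :
    2 * (‖x‖ * ‖y‖) ≤ (Real.sqrt (ω / Ω) + Real.sqrt (Ω / ω)) * re (@inner 𝕜 _ _ y x) := by
  have hs : re (@inner 𝕜 _ _ x y) = re (@inner 𝕜 _ _ y x) := inner_re_symm x y
  have h1 : ‖x‖ ^ 2 + ω * Ω * ‖y‖ ^ 2 ≤ (ω + Ω) * re (@inner 𝕜 _ _ y x) := by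
    have hx : re (@inner 𝕜 _ _ x x) = ‖x‖ ^ 2 := inner_self_eq_norm_sq x
    have hy : re (@inner 𝕜 _ _ y y) = ‖y‖ ^ 2 := inner_self_eq_norm_sq y
    simp only [inner_sub_left, inner_sub_right, inner_smul_left, inner_smul_right, map_sub,
      RCLike.conj_ofReal, RCLike.re_ofReal_mul, hs, hx, hy] at h
    linarith
  obtain ⟨a, ha, rfl⟩ : ∃ a : ℝ, 0 < a ∧ a ^ 2 = ω :=
    ⟨Real.sqrt ω, Real.sqrt_pos.2 hω, Real.sq_sqrt hω.le⟩
  obtain ⟨b, hb, rfl⟩ : ∃ b : ℝ, 0 < b ∧ b ^ 2 = Ω :=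
    ⟨Real.sqrt Ω, Real.sqrt_pos.2 hΩ, Real.sq_sqrt hΩ.le⟩
  rw [← div_pow, ← div_pow, Real.sqrt_sq (by positivity), Real.sqrt_sq (by positivity)]
  have e : a / b + b / a = (a ^ 2 + b ^ 2) / (a * b) := by field_simp
  rw [e, div_mul_eq_mul_div, le_div_iff₀ (by positivity)]
  nlinarith [sq_nonneg (‖x‖ - a * b * ‖y‖)]
end

section
/- Let T be a set and A : (T → ℝ) → ℝ a functional that is linear (A(α·f + β·g) = α·A(f) + β·A(g) for all α, β ∈ ℝ and f, g) and isotonic (f(t) ≥ g(t) for all t ∈ T implies A(f) ≥ A(g)). Let f, g, h : T → ℝ with h ≥ 0 and A(h) > 0, and suppose m, M > 0 satisfy m·g(t) ≤ f(t) ≤ M·g(t) for all t ∈ T. Then A(f·g·h)² ≤ A(f²·h)·A(g²·h) ≤ (M + m)²/(4·m·M) · A(f·g·h)². -/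
/-- Proposition 3.1: reverse Cauchy–Schwarz for isotonic linear functionals. -/
theorem isotonic_functional_cassels {T : Type*} (A : (T → ℝ) → ℝ)
    (hlin : ∀ (α β : ℝ) (f g : T → ℝ), A (fun t => α * f t + β * g t) = α * A f + β * A g)
    (hiso : ∀ f g : T → ℝ, (∀ t, g t ≤ f t) → A g ≤ A f)
    (f g h : T → ℝ) (hh : ∀ t, 0 ≤ h t) (hAh : 0 < A h)
    (m M : ℝ) (hm : 0 < m) (hM : 0 < M)
    (hfg : ∀ t, m * g t ≤ f t ∧ f t ≤ M * g t) :
    A (fun t => f t * g t * h t) ^ 2 ≤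
        A (fun t => f t ^ 2 * h t) * A (fun t => g t ^ 2 * h t) ∧
      A (fun t => f t ^ 2 * h t) * A (fun t => g t ^ 2 * h t) ≤
        (M + m) ^ 2 / (4 * m * M) * A (fun t => f t * g t * h t) ^ 2 := by
  have h0 : A (fun _ => 0) = 0 := by
    have := hlin 0 0 h h
    simpa using this
  have hX : 0 ≤ A (fun t => f t ^ 2 * h t) := by
    rw [← h0]; exact hiso _ _ fun t => mul_nonneg (sq_nonneg _) (hh t)
  have hY : 0 ≤ A (fun t => g t ^ 2 * h t) := by
    rw [← h0]; exact hiso _ _ fun t => mul_nonneg (sq_nonneg _) (hh t)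
  have key : ∀ a b c : ℝ, (∀ t, 0 ≤ a * f t ^ 2 + b * (f t * g t) + c * g t ^ 2) →
      0 ≤ a * A (fun t => f t ^ 2 * h t) + b * A (fun t => f t * g t * h t)
        + c * A (fun t => g t ^ 2 * h t) := by
    intro a b c H
    have e1 := hlin a b (fun t => f t ^ 2 * h t) (fun t => f t * g t * h t)
    have e2 := hlin 1 c (fun t => a * (f t ^ 2 * h t) + b * (f t * g t * h t))
      (fun t => g t ^ 2 * h t)
    rw [e1, one_mul] at e2
    rw [← e2, ← h0]
    refine hiso _ _ fun t => ?_
    have := mul_nonneg (H t) (hh t)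
    linarith
  have k1 : ∀ x : ℝ, _ := fun x => key 1 (2 * x) (x ^ 2) (fun t => by
    nlinarith [sq_nonneg (f t + x * g t)])
  have k2 := key (-1) (M + m) (-(m * M)) (fun t => by
    nlinarith [mul_nonneg (sub_nonneg.2 (hfg t).1) (sub_nonneg.2 (hfg t).2)])
  generalize A (fun t => f t ^ 2 * h t) = X at *
  generalize A (fun t => g t ^ 2 * h t) = Y at *
  generalize A (fun t => f t * g t * h t) = P at *
  have hmM : 0 < m * M := mul_pos hm hM
  constructor
  · have := discrim_le_zero (a := Y) (b := 2 * P) (c := X) (fun x => by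
      have := k1 x
      linarith)
    unfold discrim at this
    linarith
  · rw [div_mul_eq_mul_div, le_div_iff₀ (by positivity)]
    have h1 : X + m * M * Y ≤ (M + m) * P := by linarith
    have h2 : 0 ≤ X + m * M * Y := by positivity
    have h3 := pow_le_pow_left₀ h2 h1 2
    nlinarith [sq_nonneg (X - m * M * Y)]
end

section
/- Let T be a set and A : (T → ℝ) → ℝ a functional that is linear (A(α·f + β·g) = α·A(f) + β·A(g) for all α, β ∈ ℝ and f, g) and isotonic (f(t) ≥ g(t) for all t ∈ T implies A(f) ≥ A(g)). Let f, g, h : T → ℝ with h ≥ 0 and A(h) > 0, and suppose m, M > 0 satisfy m·g(t) ≤ f(t) ≤ M·g(t) for all t ∈ T. Then 0 ≤ √(A(f²·h)·A(g²·h)) − A(h·f·g) ≤ (√M − √m)²/(2√(m·M)) · A(h·f·g). -/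
/-- Corollary 3.2, inequality (3.4). -/
theorem isotonic_functional_cassels_additive {T : Type*} (A : (T → ℝ) → ℝ)
    (hlin : ∀ (α β : ℝ) (f g : T → ℝ), A (fun t => α * f t + β * g t) = α * A f + β * A g)
    (hiso : ∀ f g : T → ℝ, (∀ t, g t ≤ f t) → A g ≤ A f)
    (f g h : T → ℝ) (hh : ∀ t, 0 ≤ h t) (hAh : 0 < A h)
    (m M : ℝ) (hm : 0 < m) (hM : 0 < M)
    (hfg : ∀ t, m * g t ≤ f t ∧ f t ≤ M * g t) :
    0 ≤ Real.sqrt (A (fun t => f t ^ 2 * h t) * A (fun t => g t ^ 2 * h t)) -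
        A (fun t => h t * f t * g t) ∧
      Real.sqrt (A (fun t => f t ^ 2 * h t) * A (fun t => g t ^ 2 * h t)) -
          A (fun t => h t * f t * g t) ≤
        (Real.sqrt M - Real.sqrt m) ^ 2 / (2 * Real.sqrt (m * M)) *
          A (fun t => h t * f t * g t) := by
  have h0 : A (fun _ => 0) = 0 := by
    have := hlin 0 0 h h
    simpa using this
  have hF : 0 ≤ A (fun t => f t ^ 2 * h t) := by
    rw [← h0]
    exact hiso _ _ fun t => mul_nonneg (sq_nonneg _) (hh t)
  have hG : 0 ≤ A (fun t => g t ^ 2 * h t) := by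
    rw [← h0]
    exact hiso _ _ fun t => mul_nonneg (sq_nonneg _) (hh t)
  have hP : 0 ≤ A (fun t => h t * f t * g t) := by
    rw [← h0]
    refine hiso _ _ fun t => ?_
    obtain ⟨h1, h2⟩ := hfg t
    have : 0 ≤ f t * g t := by
      rcases le_total 0 (g t) with hg | hg
      · exact mul_nonneg (le_trans (mul_nonneg hm.le hg) h1) hg
      · exact mul_nonneg_of_nonpos_of_nonpos
          (h2.trans (mul_nonpos_of_nonneg_of_nonpos hM.le hg)) hg
    rw [mul_assoc]
    exact mul_nonneg (hh t) this
  have hcs : ∀ x : ℝ, 0 ≤ A (fun t => g t ^ 2 * h t) * (x * x)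
      + (-2 * A (fun t => h t * f t * g t)) * x + A (fun t => f t ^ 2 * h t) := by
    intro x
    have e1 := hlin (x * x) (-2 * x) (fun t => g t ^ 2 * h t) (fun t => h t * f t * g t)
    have e2 := hlin 1 1 (fun t => x * x * (g t ^ 2 * h t) + -2 * x * (h t * f t * g t))
      (fun t => f t ^ 2 * h t)
    have e3 := hiso (fun t => 1 * (x * x * (g t ^ 2 * h t) + -2 * x * (h t * f t * g t))
      + 1 * (f t ^ 2 * h t)) (fun _ => 0) (fun t => by
        have := mul_nonneg (sq_nonneg (f t - x * g t)) (hh t)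
        nlinarith [this])
    rw [h0, e2, e1] at e3
    linarith
  have hd := discrim_le_zero hcs
  have hub : A (fun t => f t ^ 2 * h t) + m * M * A (fun t => g t ^ 2 * h t)
      ≤ (m + M) * A (fun t => h t * f t * g t) := by
    have e1 := hlin 1 (m * M) (fun t => f t ^ 2 * h t) (fun t => g t ^ 2 * h t)
    have e2 := hlin (m + M) 0 (fun t => h t * f t * g t) (fun t => h t * f t * g t)
    have e3 := hiso (fun t => (m + M) * (h t * f t * g t) + 0 * (h t * f t * g t))
      (fun t => 1 * (f t ^ 2 * h t) + m * M * (g t ^ 2 * h t)) (fun t => by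
        have := mul_nonneg (mul_nonneg (sub_nonneg.2 (hfg t).1) (sub_nonneg.2 (hfg t).2)) (hh t)
        nlinarith [this])
    rw [e1, e2] at e3
    linarith
  generalize A (fun t => f t ^ 2 * h t) = F at *
  generalize A (fun t => g t ^ 2 * h t) = G at *
  generalize A (fun t => h t * f t * g t) = P at *
  constructor
  · refine sub_nonneg.2 (Real.le_sqrt_of_sq_le ?_)
    unfold discrim at hd
    nlinarith
  · rw [Real.sqrt_mul hm.le, Real.sqrt_mul hF]
    have hs := Real.sqrt_pos.2 hm
    have hr := Real.sqrt_pos.2 hM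
    have hs2 := Real.sq_sqrt hm.le
    have hr2 := Real.sq_sqrt hM.le
    have hF2 := Real.sq_sqrt hF
    have hG2 := Real.sq_sqrt hG
    generalize Real.sqrt m = s at *
    generalize Real.sqrt M = r at *
    generalize Real.sqrt F = a at *
    generalize Real.sqrt G = b at *
    subst hs2 hr2 hF2 hG2
    rw [div_mul_eq_mul_div, le_div_iff₀ (by positivity)]
    nlinarith [sq_nonneg (a - s * r * b)]
end

section
/- Let T be a set and A : (T → ℝ) → ℝ a functional that is linear (A(α·f + β·g) = α·A(f) + β·A(g) for all α, β ∈ ℝ and f, g) and isotonic (f(t) ≥ g(t) for all t ∈ T implies A(f) ≥ A(g)). Let f, g, h : T → ℝ with h ≥ 0 and A(h) > 0, and suppose m, M > 0 satisfy m·g(t) ≤ f(t) ≤ M·g(t) for all t ∈ T. Then 0 ≤ A(f²·h)·A(g²·h) − A(f·g·h)² ≤ (M − m)²/(4·m·M) · A(f·g·h)². -/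
/-- Corollary 3.2, inequality (3.5). -/
theorem isotonic_functional_cassels_additive_squares {T : Type*} (A : (T → ℝ) → ℝ)
    (hlin : ∀ (α β : ℝ) (f g : T → ℝ), A (fun t => α * f t + β * g t) = α * A f + β * A g)
    (hiso : ∀ f g : T → ℝ, (∀ t, g t ≤ f t) → A g ≤ A f)
    (f g h : T → ℝ) (hh : ∀ t, 0 ≤ h t) (hAh : 0 < A h)
    (m M : ℝ) (hm : 0 < m) (hM : 0 < M)
    (hfg : ∀ t, m * g t ≤ f t ∧ f t ≤ M * g t) :
    0 ≤ A (fun t => f t ^ 2 * h t) * A (fun t => g t ^ 2 * h t) -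
        A (fun t => f t * g t * h t) ^ 2 ∧
      A (fun t => f t ^ 2 * h t) * A (fun t => g t ^ 2 * h t) -
          A (fun t => f t * g t * h t) ^ 2 ≤
        (M - m) ^ 2 / (4 * m * M) * A (fun t => f t * g t * h t) ^ 2 := by
  have h0 : A (fun _ => 0) = 0 := by
    have := hlin 0 0 h h
    simpa using this
  have hpos : ∀ u : T → ℝ, (∀ t, 0 ≤ u t) → 0 ≤ A u := fun u hu => by
    have := hiso u (fun _ => 0) hu
    rwa [h0] at this
  have key : ∀ a b c : ℝ, A (fun t => a * (f t ^ 2 * h t) + 1 * (b * (g t ^ 2 * h t)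
      + c * (f t * g t * h t))) = a * A (fun t => f t ^ 2 * h t)
      + b * A (fun t => g t ^ 2 * h t) + c * A (fun t => f t * g t * h t) := fun a b c => by
    rw [hlin a 1 (fun t => f t ^ 2 * h t)
      (fun t => b * (g t ^ 2 * h t) + c * (f t * g t * h t)),
      hlin b c (fun t => g t ^ 2 * h t) (fun t => f t * g t * h t)]
    ring
  have hF : 0 ≤ A (fun t => f t ^ 2 * h t) :=
    hpos _ fun t => mul_nonneg (sq_nonneg _) (hh t)
  have hG : 0 ≤ A (fun t => g t ^ 2 * h t) :=
    hpos _ fun t => mul_nonneg (sq_nonneg _) (hh t)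
  have h1 : ∀ x : ℝ, 0 ≤ 1 * A (fun t => f t ^ 2 * h t)
      + x ^ 2 * A (fun t => g t ^ 2 * h t) + (-2 * x) * A (fun t => f t * g t * h t) := by
    intro x
    rw [← key]
    refine hpos _ fun t => ?_
    have := mul_nonneg (sq_nonneg (f t - x * g t)) (hh t)
    linarith
  have h2 : 0 ≤ (-1) * A (fun t => f t ^ 2 * h t)
      + (-(m * M)) * A (fun t => g t ^ 2 * h t)
      + (M + m) * A (fun t => f t * g t * h t) := by
    rw [← key]
    refine hpos _ fun t => ?_
    have := mul_nonneg (mul_nonneg (sub_nonneg.2 (hfg t).1) (sub_nonneg.2 (hfg t).2)) (hh t)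
    linarith
  generalize A (fun t => f t ^ 2 * h t) = F at *
  generalize A (fun t => g t ^ 2 * h t) = G at *
  generalize A (fun t => f t * g t * h t) = C at *
  have hmM : 0 < m * M := mul_pos hm hM
  constructor
  · have := discrim_le_zero (a := G) (b := -2 * C) (c := F) fun x => by
      have := h1 x
      linarith
    unfold discrim at this
    linarith
  · have h3 : 0 ≤ F + m * M * G := by positivity
    have h4 : (F + m * M * G) ^ 2 ≤ ((M + m) * C) ^ 2 :=
      pow_le_pow_left₀ h3 (by linarith) 2
    have h5 := sq_nonneg (F - m * M * G)
    rw [div_mul_eq_mul_div, le_div_iff₀ (by positivity)]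
    linarith
end

section
/- Let (Ω, Σ, μ) be a measure space, ρ : Ω → [0, ∞) measurable, and 𝕜 = ℝ or ℂ. Let a, A ∈ 𝕜 with Re(conj(a)·A) > 0, and let f, g : Ω → 𝕜 be measurable with ∫ ρ(s)·|f(s)|² dμ(s) < ∞ and ∫ ρ(s)·|g(s)|² dμ(s) < ∞. If ∫ Re[(A·g(s) − f(s))·(conj(f(s)) − conj(a)·conj(g(s)))]·ρ(s) dμ(s) ≥ 0, then (∫ ρ·|f|² dμ · ∫ ρ·|g|² dμ)^(1/2) ≤ (1/2)·(∫ ρ(s)·Re[A·conj(f(s))·g(s) + conj(a)·f(s)·conj(g(s))] dμ(s)) / (Re(conj(a)·A))^(1/2) ≤ (1/2)·(|A| + |a|)/(Re(conj(a)·A))^(1/2) · |∫ ρ(s)·f(s)·conj(g(s)) dμ(s)|. -/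
open RCLike ComplexConjugate MeasureTheory

/-- Proposition 4.1: counterpart of the weighted Cauchy–Bunyakovsky–Schwarz
integral inequality. -/
theorem weighted_integral_reverse_schwarz {𝕜 Ω : Type*} [RCLike 𝕜] [MeasurableSpace Ω]
    (μ : Measure Ω) (ρ : Ω → ℝ) (hρm : Measurable ρ) (hρ : ∀ s, 0 ≤ ρ s)
    (a A : 𝕜) (ha : 0 < re (conj a * A))
    (f g : Ω → 𝕜) (hfm : Measurable f) (hgm : Measurable g)
    (hf2 : Integrable (fun s => ρ s * ‖f s‖ ^ 2) μ)
    (hg2 : Integrable (fun s => ρ s * ‖g s‖ ^ 2) μ)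
    (h : 0 ≤ ∫ s, re ((A * g s - f s) * (conj (f s) - conj a * conj (g s))) * ρ s ∂μ) :
    Real.sqrt ((∫ s, ρ s * ‖f s‖ ^ 2 ∂μ) * (∫ s, ρ s * ‖g s‖ ^ 2 ∂μ)) ≤
        1 / 2 * (∫ s, ρ s * re (A * conj (f s) * g s + conj a * f s * conj (g s)) ∂μ) /
          Real.sqrt (re (conj a * A)) ∧
      1 / 2 * (∫ s, ρ s * re (A * conj (f s) * g s + conj a * f s * conj (g s)) ∂μ) /
          Real.sqrt (re (conj a * A)) ≤
        1 / 2 * ((‖A‖ + ‖a‖) / Real.sqrt (re (conj a * A))) *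
          ‖∫ s, (ρ s : 𝕜) * f s * conj (g s) ∂μ‖ := by
  have hI : Integrable (fun s => (ρ s : 𝕜) * f s * conj (g s)) μ := by
    refine (hf2.add hg2).mono' ?_ ?_
    · exact (((RCLike.measurable_ofReal.comp hρm).mul hfm).mul
        (RCLike.continuous_conj.measurable.comp hgm)).aestronglyMeasurable
    · refine Filter.Eventually.of_forall fun s => ?_
      simp only [norm_mul, RCLike.norm_ofReal, RCLike.norm_conj, abs_of_nonneg (hρ s),
        Pi.add_apply]
      have h1 : ‖f s‖ * ‖g s‖ ≤ ‖f s‖ ^ 2 + ‖g s‖ ^ 2 := by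
        nlinarith [sq_nonneg (‖f s‖ - ‖g s‖), sq_nonneg ‖f s‖, sq_nonneg ‖g s‖]
      nlinarith [mul_le_mul_of_nonneg_left h1 (hρ s)]
  have hpt : ∀ s, ρ s * re (A * conj (f s) * g s + conj a * f s * conj (g s)) =
      re ((conj A + conj a) * ((ρ s : 𝕜) * f s * conj (g s))) := by
    intro s
    simp [RCLike.mul_re, RCLike.mul_im]
    ring
  have hJ : Integrable (fun s => (conj A + conj a) * ((ρ s : 𝕜) * f s * conj (g s))) μ :=
    hI.const_mul _
  have hRi : Integrable
      (fun s => ρ s * re (A * conj (f s) * g s + conj a * f s * conj (g s))) μ := by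
    simp only [hpt]
    exact hJ.re
  have hR : (∫ s, ρ s * re (A * conj (f s) * g s + conj a * f s * conj (g s)) ∂μ) =
      re ((conj A + conj a) * ∫ s, (ρ s : 𝕜) * f s * conj (g s) ∂μ) := by
    simp only [hpt]
    rw [integral_re hJ, integral_const_mul]
  have hpt2 : ∀ s, re ((A * g s - f s) * (conj (f s) - conj a * conj (g s))) * ρ s =
      ρ s * re (A * conj (f s) * g s + conj a * f s * conj (g s)) - ρ s * ‖f s‖ ^ 2
        - re (conj a * A) * (ρ s * ‖g s‖ ^ 2) := by
    intro s
    simp only [RCLike.norm_sq_eq_def]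
    simp [RCLike.mul_re, RCLike.mul_im]
    ring
  simp only [hpt2] at h
  have hsub : Integrable (fun s => ρ s * re (A * conj (f s) * g s + conj a * f s * conj (g s))
      - ρ s * ‖f s‖ ^ 2) μ := hRi.sub hf2
  rw [integral_sub hsub (hg2.const_mul _), integral_sub hRi hf2,
    integral_const_mul] at h
  have hF : 0 ≤ ∫ s, ρ s * ‖f s‖ ^ 2 ∂μ :=
    integral_nonneg fun s => mul_nonneg (hρ s) (sq_nonneg _)
  have hG : 0 ≤ ∫ s, ρ s * ‖g s‖ ^ 2 ∂μ :=
    integral_nonneg fun s => mul_nonneg (hρ s) (sq_nonneg _)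
  have hc := Real.sqrt_pos.2 ha
  constructor
  · rw [le_div_iff₀ hc, ← Real.sqrt_mul (mul_nonneg hF hG)]
    have hcG := mul_nonneg ha.le hG
    generalize (∫ s, ρ s * ‖f s‖ ^ 2 ∂μ) = F at *
    generalize (∫ s, ρ s * ‖g s‖ ^ 2 ∂μ) = G at *
    generalize (∫ s, ρ s * re (A * conj (f s) * g s + conj a * f s * conj (g s)) ∂μ) = R at *
    generalize re (conj a * A) = c at *
    refine Real.sqrt_le_iff.2 ⟨by linarith, ?_⟩
    have h3 : F + c * G ≤ R := by linarith
    have h4 : (F + c * G) ^ 2 ≤ R ^ 2 := pow_le_pow_left₀ (by linarith) h3 2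
    nlinarith [sq_nonneg (F - c * G)]
  · rw [hR]
    have h5 : re ((conj A + conj a) * ∫ s, (ρ s : 𝕜) * f s * conj (g s) ∂μ) ≤
        (‖A‖ + ‖a‖) * ‖∫ s, (ρ s : 𝕜) * f s * conj (g s) ∂μ‖ := by
      refine (RCLike.re_le_norm _).trans ?_
      rw [norm_mul]
      refine mul_le_mul_of_nonneg_right ?_ (norm_nonneg _)
      refine (norm_add_le _ _).trans ?_
      simp only [RCLike.norm_conj, le_refl]
    rw [div_le_iff₀ hc]
    have h6 : ∀ x y z : ℝ, z ≠ 0 → 1 / 2 * (x / z) * y * z = 1 / 2 * (x * y) := by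
      intro x y z hz
      field_simp
    rw [h6 _ _ _ hc.ne']
    linarith
end

section
/- Let (Ω, Σ, μ) be a measure space, ρ : Ω → [0, ∞) measurable, and 𝕜 = ℝ or ℂ. Let m, M > 0 be real numbers, and let f, g : Ω → 𝕜 be measurable with ∫ ρ(s)·|f(s)|² dμ(s) < ∞ and ∫ ρ(s)·|g(s)|² dμ(s) < ∞. If ∫ ρ(s)·Re[(M·g(s) − f(s))·(conj(f(s)) − m·conj(g(s)))] dμ(s) ≥ 0, then (∫ ρ·|f|² dμ · ∫ ρ·|g|² dμ)^(1/2) ≤ (1/2)·(M + m)/√(m·M) · ∫ ρ(s)·Re[f(s)·conj(g(s))] dμ(s). -/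
open RCLike ComplexConjugate MeasureTheory

/-- Proposition 4.5. -/
theorem weighted_integral_cassels {𝕜 Ω : Type*} [RCLike 𝕜] [MeasurableSpace Ω]
    (μ : Measure Ω) (ρ : Ω → ℝ) (hρm : Measurable ρ) (hρ : ∀ s, 0 ≤ ρ s)
    (m M : ℝ) (hm : 0 < m) (hM : 0 < M)
    (f g : Ω → 𝕜) (hfm : Measurable f) (hgm : Measurable g)
    (hf2 : Integrable (fun s => ρ s * ‖f s‖ ^ 2) μ)
    (hg2 : Integrable (fun s => ρ s * ‖g s‖ ^ 2) μ)
    (h : 0 ≤ ∫ s, ρ s * re (((M : 𝕜) * g s - f s) * (conj (f s) - (m : 𝕜) * conj (g s))) ∂μ) :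
    Real.sqrt ((∫ s, ρ s * ‖f s‖ ^ 2 ∂μ) * (∫ s, ρ s * ‖g s‖ ^ 2 ∂μ)) ≤
      1 / 2 * ((M + m) / Real.sqrt (m * M)) * ∫ s, ρ s * re (f s * conj (g s)) ∂μ := by
  have pt : ∀ s, ρ s * re (((M : 𝕜) * g s - f s) * (conj (f s) - (m : 𝕜) * conj (g s)))
      = (M + m) * (ρ s * re (f s * conj (g s))) - ρ s * ‖f s‖ ^ 2
        - m * M * (ρ s * ‖g s‖ ^ 2) := by
    intro s
    simp only [← RCLike.normSq_eq_def', RCLike.normSq_apply, RCLike.mul_re, RCLike.mul_im,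
      map_sub, RCLike.conj_re, RCLike.conj_im, RCLike.ofReal_re, RCLike.ofReal_im]
    ring
  have hC : Integrable (fun s => ρ s * re (f s * conj (g s))) μ := by
    refine (hf2.add hg2).mono' ?_ ?_
    · have hc : Measurable (fun s => conj (g s)) := RCLike.continuous_conj.measurable.comp hgm
      exact (hρm.mul (RCLike.measurable_re.comp (hfm.mul hc))).aestronglyMeasurable
    · refine Filter.Eventually.of_forall fun s => ?_
      have h1 : |re (f s * conj (g s))| ≤ ‖f s‖ * ‖g s‖ := by
        refine (RCLike.abs_re_le_norm _).trans ?_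
        rw [norm_mul, RCLike.norm_conj]
      have h2 : |re (f s * conj (g s))| ≤ ‖f s‖ ^ 2 + ‖g s‖ ^ 2 := by
        nlinarith [sq_nonneg (‖f s‖ - ‖g s‖), sq_nonneg (‖f s‖), sq_nonneg (‖g s‖)]
      rw [Real.norm_eq_abs, abs_mul, abs_of_nonneg (hρ s)]
      simpa [mul_add] using mul_le_mul_of_nonneg_left h2 (hρ s)
  simp_rw [pt] at h
  have hD : Integrable (fun s => (M + m) * (ρ s * re (f s * conj (g s))) - ρ s * ‖f s‖ ^ 2) μ :=
    (hC.const_mul _).sub hf2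
  rw [integral_sub hD (hg2.const_mul _),
    integral_sub (hC.const_mul _) hf2, integral_const_mul, integral_const_mul] at h
  have hA : 0 ≤ ∫ s, ρ s * ‖f s‖ ^ 2 ∂μ :=
    integral_nonneg fun s => mul_nonneg (hρ s) (sq_nonneg _)
  have hB : 0 ≤ ∫ s, ρ s * ‖g s‖ ^ 2 ∂μ :=
    integral_nonneg fun s => mul_nonneg (hρ s) (sq_nonneg _)
  generalize (∫ s, ρ s * ‖f s‖ ^ 2 ∂μ) = A at *
  generalize (∫ s, ρ s * ‖g s‖ ^ 2 ∂μ) = B at *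
  generalize (∫ s, ρ s * re (f s * conj (g s)) ∂μ) = C at *
  have hmM : 0 < m * M := mul_pos hm hM
  have hs : 0 < Real.sqrt (m * M) := Real.sqrt_pos.2 hmM
  have key : Real.sqrt (A * B) * Real.sqrt (m * M) ≤ (M + m) * C / 2 := by
    rw [← Real.sqrt_mul (mul_nonneg hA hB)]
    refine (Real.sqrt_le_iff.2 ⟨?_, ?_⟩ : _ ≤ (A + m * M * B) / 2).trans (by linarith)
    · positivity
    · nlinarith [sq_nonneg (A - m * M * B)]
  have e : 1 / 2 * ((M + m) / Real.sqrt (m * M)) * C = ((M + m) * C / 2) / Real.sqrt (m * M) := by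
    ring
  rw [e, le_div_iff₀ hs]
  exact key
end

section
/- Let (Ω, Σ, μ) be a measure space, ρ : Ω → [0, ∞) measurable, and 𝕜 = ℝ or ℂ. Let m, M > 0 be real numbers, and let f, g : Ω → 𝕜 be measurable with ∫ ρ(s)·|f(s)|² dμ(s) < ∞ and ∫ ρ(s)·|g(s)|² dμ(s) < ∞. If ∫ ρ(s)·Re[(M·g(s) − f(s))·(conj(f(s)) − m·conj(g(s)))] dμ(s) ≥ 0, then 0 ≤ (∫ ρ·|f|² dμ · ∫ ρ·|g|² dμ)^(1/2) − ∫ ρ(s)·Re[f(s)·conj(g(s))] dμ(s) ≤ (√M − √m)²/(2√(m·M)) · ∫ ρ(s)·Re[f(s)·conj(g(s))] dμ(s). -/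
open RCLike ComplexConjugate MeasureTheory

/-- Corollary 4.6, inequality (4.9). -/
theorem weighted_integral_cassels_additive {𝕜 Ω : Type*} [RCLike 𝕜] [MeasurableSpace Ω]
    (μ : Measure Ω) (ρ : Ω → ℝ) (hρm : Measurable ρ) (hρ : ∀ s, 0 ≤ ρ s)
    (m M : ℝ) (hm : 0 < m) (hM : 0 < M)
    (f g : Ω → 𝕜) (hfm : Measurable f) (hgm : Measurable g)
    (hf2 : Integrable (fun s => ρ s * ‖f s‖ ^ 2) μ)
    (hg2 : Integrable (fun s => ρ s * ‖g s‖ ^ 2) μ)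
    (h : 0 ≤ ∫ s, ρ s * re (((M : 𝕜) * g s - f s) * (conj (f s) - (m : 𝕜) * conj (g s))) ∂μ) :
    0 ≤ Real.sqrt ((∫ s, ρ s * ‖f s‖ ^ 2 ∂μ) * (∫ s, ρ s * ‖g s‖ ^ 2 ∂μ)) -
        ∫ s, ρ s * re (f s * conj (g s)) ∂μ ∧
      Real.sqrt ((∫ s, ρ s * ‖f s‖ ^ 2 ∂μ) * (∫ s, ρ s * ‖g s‖ ^ 2 ∂μ)) -
          (∫ s, ρ s * re (f s * conj (g s)) ∂μ) ≤
        (Real.sqrt M - Real.sqrt m) ^ 2 / (2 * Real.sqrt (m * M)) *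
          ∫ s, ρ s * re (f s * conj (g s)) ∂μ := by
  have hfs : ∀ z : 𝕜, ‖z‖ ^ 2 = re z * re z + im z * im z := fun z => by
    rw [← RCLike.normSq_eq_def', RCLike.normSq_apply]
  have hre : ∀ z w : 𝕜, re (z * conj w) = re z * re w + im z * im w := fun z w => by
    simp [RCLike.mul_re]
  have hC : Integrable (fun s => ρ s * re (f s * conj (g s))) μ := by
    refine (hf2.add hg2).mono' ?_ (Filter.Eventually.of_forall fun s => ?_)
    · have h1 : Measurable fun s => re (f s * conj (g s)) :=
        RCLike.measurable_re.comp (hfm.mul (RCLike.continuous_conj.measurable.comp hgm))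
      exact (hρm.mul h1).aestronglyMeasurable
    · have h1 : |re (f s * conj (g s))| ≤ ‖f s‖ ^ 2 + ‖g s‖ ^ 2 := by
        rw [hre, hfs, hfs, abs_le]
        constructor <;>
        nlinarith [sq_nonneg (re (f s) + re (g s)), sq_nonneg (im (f s) + im (g s)),
          sq_nonneg (re (f s) - re (g s)), sq_nonneg (im (f s) - im (g s)),
          sq_nonneg (re (f s)), sq_nonneg (re (g s)), sq_nonneg (im (f s)), sq_nonneg (im (g s))]
      rw [Real.norm_eq_abs, abs_mul, abs_of_nonneg (hρ s)]
      have := mul_le_mul_of_nonneg_left h1 (hρ s)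
      simp only [Pi.add_apply]
      linarith
  have hlin : ∀ a b c : ℝ, ∫ s, (a * (ρ s * ‖f s‖ ^ 2) + b * (ρ s * ‖g s‖ ^ 2)
      + c * (ρ s * re (f s * conj (g s)))) ∂μ = a * (∫ s, ρ s * ‖f s‖ ^ 2 ∂μ)
      + b * (∫ s, ρ s * ‖g s‖ ^ 2 ∂μ) + c * ∫ s, ρ s * re (f s * conj (g s)) ∂μ := by
    intro a b c
    have h12 : Integrable (fun s => a * (ρ s * ‖f s‖ ^ 2) + b * (ρ s * ‖g s‖ ^ 2)) μ :=
      (hf2.const_mul a).add (hg2.const_mul b)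
    rw [integral_add h12 (hC.const_mul c),
      integral_add (hf2.const_mul a) (hg2.const_mul b), integral_const_mul, integral_const_mul,
      integral_const_mul]
  have hh : ∫ s, ρ s * re (((M : 𝕜) * g s - f s) * (conj (f s) - (m : 𝕜) * conj (g s))) ∂μ
      = (-1) * (∫ s, ρ s * ‖f s‖ ^ 2 ∂μ)
      + (-(m * M)) * (∫ s, ρ s * ‖g s‖ ^ 2 ∂μ)
      + (M + m) * ∫ s, ρ s * re (f s * conj (g s)) ∂μ := by
    rw [← hlin]
    congr 1
    funext s
    rw [hfs, hfs, hre]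
    simp [RCLike.mul_re, RCLike.mul_im]
    ring
  have hq : ∀ t : ℝ, 0 ≤ 1 * (∫ s, ρ s * ‖f s‖ ^ 2 ∂μ)
      + (t * t) * (∫ s, ρ s * ‖g s‖ ^ 2 ∂μ) + (2 * t) * ∫ s, ρ s * re (f s * conj (g s)) ∂μ := by
    intro t
    rw [← hlin]
    refine integral_nonneg fun s => ?_
    have : 0 ≤ ρ s * ((re (f s) + t * re (g s)) ^ 2 + (im (f s) + t * im (g s)) ^ 2) :=
      mul_nonneg (hρ s) (by positivity)
    simp only [Pi.zero_apply]
    rw [hfs, hfs, hre]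
    linarith
  have hA : 0 ≤ ∫ s, ρ s * ‖f s‖ ^ 2 ∂μ :=
    integral_nonneg fun s => mul_nonneg (hρ s) (by positivity)
  have hB : 0 ≤ ∫ s, ρ s * ‖g s‖ ^ 2 ∂μ :=
    integral_nonneg fun s => mul_nonneg (hρ s) (by positivity)
  rw [hh] at h
  generalize (∫ s, ρ s * ‖f s‖ ^ 2 ∂μ) = A at *
  generalize (∫ s, ρ s * ‖g s‖ ^ 2 ∂μ) = B at *
  generalize (∫ s, ρ s * re (f s * conj (g s)) ∂μ) = C at *
  clear hlin hh
  constructor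
  · have hd : discrim B (2 * C) A ≤ 0 := discrim_le_zero fun t => by linarith [hq t]
    rw [discrim] at hd
    exact sub_nonneg.2 (Real.le_sqrt_of_sq_le (by linarith))
  · have hp : 0 < Real.sqrt (m * M) := Real.sqrt_pos.2 (mul_pos hm hM)
    have e1 : (Real.sqrt M - Real.sqrt m) ^ 2 = M + m - 2 * Real.sqrt (m * M) := by
      rw [Real.sqrt_mul hm.le, sub_sq, Real.sq_sqrt hM.le, Real.sq_sqrt hm.le]
      ring
    have e2 : 2 * (Real.sqrt (m * M) * Real.sqrt (A * B)) ≤ A + m * M * B := by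
      have e3 : Real.sqrt (m * M) * Real.sqrt (A * B) = Real.sqrt A * Real.sqrt (m * M * B) := by
        rw [← Real.sqrt_mul (mul_pos hm hM).le, ← Real.sqrt_mul hA]
        congr 1
        ring
      rw [e3]
      have := sq_nonneg (Real.sqrt A - Real.sqrt (m * M * B))
      rw [sub_sq, Real.sq_sqrt hA, Real.sq_sqrt (mul_nonneg (mul_pos hm hM).le hB)] at this
      linarith
    rw [e1, div_mul_eq_mul_div, le_div_iff₀ (by positivity)]
    nlinarith
end

section
/- Let (Ω, Σ, μ) be a measure space, ρ : Ω → [0, ∞) measurable, and 𝕜 = ℝ or ℂ. Let m, M > 0 be real numbers, and let f, g : Ω → 𝕜 be measurable with ∫ ρ(s)·|f(s)|² dμ(s) < ∞ and ∫ ρ(s)·|g(s)|² dμ(s) < ∞. If ∫ ρ(s)·Re[(M·g(s) − f(s))·(conj(f(s)) − m·conj(g(s)))] dμ(s) ≥ 0, then 0 ≤ (∫ ρ·|f|² dμ)·(∫ ρ·|g|² dμ) − (∫ ρ(s)·Re[f(s)·conj(g(s))] dμ(s))² ≤ (M − m)²/(4·m·M) · (∫ ρ(s)·Re[f(s)·conj(g(s))]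 dμ(s))². -/
open RCLike ComplexConjugate MeasureTheory

/-- Corollary 4.6, inequality (4.10). -/
theorem weighted_integral_cassels_additive_squares {𝕜 Ω : Type*} [RCLike 𝕜] [MeasurableSpace Ω]
    (μ : Measure Ω) (ρ : Ω → ℝ) (hρm : Measurable ρ) (hρ : ∀ s, 0 ≤ ρ s)
    (m M : ℝ) (hm : 0 < m) (hM : 0 < M)
    (f g : Ω → 𝕜) (hfm : Measurable f) (hgm : Measurable g)
    (hf2 : Integrable (fun s => ρ s * ‖f s‖ ^ 2) μ)
    (hg2 : Integrable (fun s => ρ s * ‖g s‖ ^ 2) μ)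
    (h : 0 ≤ ∫ s, ρ s * re (((M : 𝕜) * g s - f s) * (conj (f s) - (m : 𝕜) * conj (g s))) ∂μ) :
    0 ≤ (∫ s, ρ s * ‖f s‖ ^ 2 ∂μ) * (∫ s, ρ s * ‖g s‖ ^ 2 ∂μ) -
        (∫ s, ρ s * re (f s * conj (g s)) ∂μ) ^ 2 ∧
      (∫ s, ρ s * ‖f s‖ ^ 2 ∂μ) * (∫ s, ρ s * ‖g s‖ ^ 2 ∂μ) -
          (∫ s, ρ s * re (f s * conj (g s)) ∂μ) ^ 2 ≤
        (M - m) ^ 2 / (4 * m * M) * (∫ s, ρ s * re (f s * conj (g s)) ∂μ) ^ 2 := by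
  have hC : Integrable (fun s => ρ s * re (f s * conj (g s))) μ := by
    refine Integrable.mono' (hf2.add hg2) ?_ ?_
    · refine Measurable.aestronglyMeasurable ?_
      exact hρm.mul (RCLike.measurable_re.comp
        (hfm.mul (RCLike.continuous_conj.measurable.comp hgm)))
    · refine Filter.Eventually.of_forall fun s => ?_
      have h1 : |re (f s * conj (g s))| ≤ ‖f s‖ * ‖g s‖ := by
        have := RCLike.abs_re_le_norm (f s * conj (g s))
        rwa [norm_mul, RCLike.norm_conj] at this
      rw [Real.norm_eq_abs, abs_mul, abs_of_nonneg (hρ s)]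
      simp only [Pi.add_apply]
      rw [← mul_add]
      refine mul_le_mul_of_nonneg_left (h1.trans ?_) (hρ s)
      nlinarith [sq_nonneg (‖f s‖ - ‖g s‖), sq_nonneg ‖f s‖, sq_nonneg ‖g s‖]
  have e1 : (∫ s, ρ s * re (((M : 𝕜) * g s - f s) * (conj (f s) - (m : 𝕜) * conj (g s))) ∂μ)
      = (M + m) * (∫ s, ρ s * re (f s * conj (g s)) ∂μ) - (∫ s, ρ s * ‖f s‖ ^ 2 ∂μ)
        - (m * M) * (∫ s, ρ s * ‖g s‖ ^ 2 ∂μ) := by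
    rw [← integral_const_mul, ← integral_const_mul, ← integral_sub' (hC.const_mul _) hf2,
      ← integral_sub' ((hC.const_mul _).sub hf2) (hg2.const_mul _)]
    congr 1
    funext s
    simp only [Pi.add_apply, Pi.sub_apply]
    rw [← RCLike.normSq_eq_def', ← RCLike.normSq_eq_def', RCLike.normSq_apply,
      RCLike.normSq_apply]
    simp
    ring
  have e2 : ∀ t : ℝ, 0 ≤ (∫ s, ρ s * ‖g s‖ ^ 2 ∂μ) * (t * t)
      + (-2 * (∫ s, ρ s * re (f s * conj (g s)) ∂μ)) * t + (∫ s, ρ s * ‖f s‖ ^ 2 ∂μ) := by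
    intro t
    have e3 : (∫ s, ρ s * ‖f s - (t : 𝕜) * g s‖ ^ 2 ∂μ)
        = (t * t) * (∫ s, ρ s * ‖g s‖ ^ 2 ∂μ)
          + (-2 * t) * (∫ s, ρ s * re (f s * conj (g s)) ∂μ) + (∫ s, ρ s * ‖f s‖ ^ 2 ∂μ) := by
      rw [← integral_const_mul, ← integral_const_mul,
        ← integral_add' (hg2.const_mul _) (hC.const_mul _),
        ← integral_add' ((hg2.const_mul _).add (hC.const_mul _)) hf2]
      congr 1
      funext s
      simp only [Pi.add_apply, Pi.sub_apply]
      rw [← RCLike.normSq_eq_def', ← RCLike.normSq_eq_def', ← RCLike.normSq_eq_def',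
        RCLike.normSq_apply, RCLike.normSq_apply, RCLike.normSq_apply]
      simp
      ring
    have e4 : 0 ≤ ∫ s, ρ s * ‖f s - (t : 𝕜) * g s‖ ^ 2 ∂μ :=
      integral_nonneg fun s => mul_nonneg (hρ s) (sq_nonneg _)
    rw [e3] at e4
    linarith
  have hd := discrim_le_zero e2
  have hA : 0 ≤ ∫ s, ρ s * ‖f s‖ ^ 2 ∂μ :=
    integral_nonneg fun s => mul_nonneg (hρ s) (sq_nonneg _)
  have hB : 0 ≤ ∫ s, ρ s * ‖g s‖ ^ 2 ∂μ :=
    integral_nonneg fun s => mul_nonneg (hρ s) (sq_nonneg _)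
  rw [e1] at h
  generalize (∫ s, ρ s * re (f s * conj (g s)) ∂μ) = C at *
  generalize (∫ s, ρ s * ‖f s‖ ^ 2 ∂μ) = A at *
  generalize (∫ s, ρ s * ‖g s‖ ^ 2 ∂μ) = B at *
  unfold discrim at hd
  refine ⟨by nlinarith, ?_⟩
  have hmM : 0 < m * M := mul_pos hm hM
  have h5 : (A + m * M * B) ^ 2 ≤ ((M + m) * C) ^ 2 :=
    pow_le_pow_left₀ (by positivity) (by linarith) 2
  have h6 : 4 * (m * M) * (A * B) ≤ ((M + m) * C) ^ 2 := by
    nlinarith [sq_nonneg (A - m * M * B)]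
  rw [div_mul_eq_mul_div, le_div_iff₀ (by positivity)]
  nlinarith
end

section
/- Let w : ℕ → ℝ be a sequence of nonnegative reals and 𝕜 = ℝ or ℂ. Let a, A ∈ 𝕜 with Re(conj(a)·A) > 0, and let x, y : ℕ → 𝕜 be such that Σᵢ wᵢ·|xᵢ|² and Σᵢ wᵢ·|yᵢ|² are finite (summable). If Σᵢ wᵢ·Re[(A·yᵢ − xᵢ)·(conj(xᵢ) − conj(a)·conj(yᵢ))] ≥ 0, then (Σᵢ wᵢ·|xᵢ|² · Σᵢ wᵢ·|yᵢ|²)^(1/2) ≤ (1/2)·(Σᵢ wᵢ·Re[A·conj(xᵢ)·yᵢ + conj(a)·xᵢ·conj(yᵢ)]) / (Re(conj(a)·A))^(1/2) ≤ (1/2)·(|A| + |a|)/(Re(conj(a)·A))^(1/2) · |Σᵢ wᵢ·xᵢ·conj(yᵢ)|. -/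
open RCLike ComplexConjugate

/-- Proposition 5.1: counterpart of the weighted Cauchy–Bunyakovsky–Schwarz
inequality for sequences. -/
theorem weighted_sequence_reverse_schwarz {𝕜 : Type*} [RCLike 𝕜]
    (w : ℕ → ℝ) (hw : ∀ i, 0 ≤ w i) (a A : 𝕜) (ha : 0 < re (conj a * A))
    (x y : ℕ → 𝕜)
    (hx : Summable fun i => w i * ‖x i‖ ^ 2) (hy : Summable fun i => w i * ‖y i‖ ^ 2)
    (h : 0 ≤ ∑' i, w i * re ((A * y i - x i) * (conj (x i) - conj a * conj (y i)))) :
    Real.sqrt ((∑' i, w i * ‖x i‖ ^ 2) * (∑' i, w i * ‖y i‖ ^ 2)) ≤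
        1 / 2 * (∑' i, w i * re (A * conj (x i) * y i + conj a * x i * conj (y i))) /
          Real.sqrt (re (conj a * A)) ∧
      1 / 2 * (∑' i, w i * re (A * conj (x i) * y i + conj a * x i * conj (y i))) /
          Real.sqrt (re (conj a * A)) ≤
        1 / 2 * ((‖A‖ + ‖a‖) / Real.sqrt (re (conj a * A))) *
          ‖∑' i, (w i : 𝕜) * x i * conj (y i)‖ := by
  have hS : Summable fun i => (w i : 𝕜) * x i * conj (y i) := by
    refine Summable.of_norm_bounded (hx.add hy) fun i => ?_
    have h1 : ‖(w i : 𝕜)‖ = w i := by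
      rw [RCLike.norm_ofReal, abs_of_nonneg (hw i)]
    rw [norm_mul, norm_mul, h1, RCLike.norm_conj]
    have h2 : ‖x i‖ * ‖y i‖ ≤ ‖x i‖ ^ 2 + ‖y i‖ ^ 2 := by
      nlinarith [sq_nonneg (‖x i‖ - ‖y i‖), sq_nonneg (‖x i‖ + ‖y i‖)]
    have h3 := mul_le_mul_of_nonneg_left h2 (hw i)
    linarith
  have hT : HasSum (fun i => w i * re (A * conj (x i) * y i + conj a * x i * conj (y i)))
      (re ((conj A + conj a) * ∑' i, (w i : 𝕜) * x i * conj (y i))) := by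
    have h1 := RCLike.hasSum_re 𝕜 (hS.hasSum.mul_left (conj A + conj a))
    convert h1 using 2 with i
    simp only [map_add, RCLike.mul_re, RCLike.mul_im, RCLike.conj_re, RCLike.conj_im,
      RCLike.ofReal_re, RCLike.ofReal_im]
    ring
  have hsum : ∑' i, w i * re ((A * y i - x i) * (conj (x i) - conj a * conj (y i))) =
      (∑' i, w i * re (A * conj (x i) * y i + conj a * x i * conj (y i)))
      - (∑' i, w i * ‖x i‖ ^ 2) - re (conj a * A) * ∑' i, w i * ‖y i‖ ^ 2 := by
    rw [hT.tsum_eq]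
    refine HasSum.tsum_eq ?_
    have h0 := (hT.sub hx.hasSum).sub (hy.hasSum.mul_left (re (conj a * A)))
    refine Eq.mpr (congrArg (fun f => HasSum f _) (funext fun i => ?_)) h0
    simp only [map_add, map_sub, RCLike.mul_re, RCLike.mul_im, RCLike.conj_re, RCLike.conj_im,
      RCLike.norm_sq_eq_def]
    ring
  rw [hsum] at h
  have hX : 0 ≤ ∑' i, w i * ‖x i‖ ^ 2 := tsum_nonneg fun i => mul_nonneg (hw i) (sq_nonneg _)
  have hY : 0 ≤ ∑' i, w i * ‖y i‖ ^ 2 := tsum_nonneg fun i => mul_nonneg (hw i) (sq_nonneg _)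
  have hr := Real.sqrt_pos.2 ha
  constructor
  · rw [le_div_iff₀ hr, ← Real.sqrt_mul (mul_nonneg hX hY)]
    generalize (∑' i, w i * ‖x i‖ ^ 2) = X at *
    generalize (∑' i, w i * ‖y i‖ ^ 2) = Y at *
    generalize re (conj a * A) = r at *
    have h1 : Real.sqrt (X * Y * r) ≤ (X + r * Y) / 2 := by
      refine Real.sqrt_le_iff.2 ⟨by positivity, ?_⟩
      nlinarith [sq_nonneg (X - r * Y)]
    linarith
  · rw [hT.tsum_eq]
    have h1 := (RCLike.re_le_norm ((conj A + conj a) * ∑' i, (w i : 𝕜) * x i * conj (y i)))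
    rw [norm_mul] at h1
    have h2 : ‖conj A + conj a‖ ≤ ‖A‖ + ‖a‖ := by
      simpa only [RCLike.norm_conj] using norm_add_le (conj A) (conj a)
    have h3 := h1.trans (mul_le_mul_of_nonneg_right h2 (norm_nonneg _))
    have h4 := div_le_div_of_nonneg_right h3 hr.le
    calc _ = 1 / 2 * (re ((conj A + conj a) * ∑' i, (w i : 𝕜) * x i * conj (y i)) /
          Real.sqrt (re (conj a * A))) := by ring
      _ ≤ 1 / 2 * ((‖A‖ + ‖a‖) * ‖∑' i, (w i : 𝕜) * x i * conj (y i)‖ /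
          Real.sqrt (re (conj a * A))) := by linarith
      _ = _ := by ring
end

section
/- Let w : ℕ → ℝ be a sequence of nonnegative reals, 𝕜 = ℝ or ℂ, and m, M > 0 real numbers. Let x, y : ℕ → 𝕜 be such that Σᵢ wᵢ·|xᵢ|² and Σᵢ wᵢ·|yᵢ|² are finite (summable). If Σᵢ wᵢ·Re[(M·yᵢ − xᵢ)·(conj(xᵢ) − m·conj(yᵢ))] ≥ 0, then (Σᵢ wᵢ·|xᵢ|² · Σᵢ wᵢ·|yᵢ|²)^(1/2) ≤ (1/2)·(M + m)/√(m·M) · Σᵢ wᵢ·Re(xᵢ·conj(yᵢ)). -/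
open RCLike ComplexConjugate

/-- Proposition 5.5. -/
theorem weighted_sequence_cassels {𝕜 : Type*} [RCLike 𝕜]
    (w : ℕ → ℝ) (hw : ∀ i, 0 ≤ w i) (m M : ℝ) (hm : 0 < m) (hM : 0 < M)
    (x y : ℕ → 𝕜)
    (hx : Summable fun i => w i * ‖x i‖ ^ 2) (hy : Summable fun i => w i * ‖y i‖ ^ 2)
    (h : 0 ≤ ∑' i, w i * re (((M : 𝕜) * y i - x i) * (conj (x i) - (m : 𝕜) * conj (y i)))) :
    Real.sqrt ((∑' i, w i * ‖x i‖ ^ 2) * (∑' i, w i * ‖y i‖ ^ 2)) ≤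
      1 / 2 * ((M + m) / Real.sqrt (m * M)) * ∑' i, w i * re (x i * conj (y i)) := by
  have hS : Summable fun i => w i * re (x i * conj (y i)) := by
    refine Summable.of_norm_bounded (hx.add hy) (fun i => ?_)
    have h1 : |re (x i * conj (y i))| ≤ ‖x i‖ * ‖y i‖ := by
      have := RCLike.abs_re_le_norm (x i * conj (y i))
      rwa [norm_mul, RCLike.norm_conj] at this
    rw [Real.norm_eq_abs, abs_mul, abs_of_nonneg (hw i), ← mul_add]
    refine mul_le_mul_of_nonneg_left ?_ (hw i)
    nlinarith [sq_nonneg (‖x i‖ - ‖y i‖), sq_nonneg (‖x i‖), sq_nonneg (‖y i‖)]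
  have hid : ∀ i, w i * re (((M : 𝕜) * y i - x i) * (conj (x i) - (m : 𝕜) * conj (y i)))
      = (M + m) * (w i * re (x i * conj (y i))) - w i * ‖x i‖ ^ 2
        - (m * M) * (w i * ‖y i‖ ^ 2) := by
    intro i
    rw [RCLike.norm_sq_eq_def, RCLike.norm_sq_eq_def]
    simp only [RCLike.mul_re, RCLike.mul_im, map_sub, RCLike.conj_re, RCLike.conj_im,
      RCLike.ofReal_re, RCLike.ofReal_im]
    ring
  simp_rw [hid] at h
  rw [Summable.tsum_sub ((hS.mul_left _).sub hx) (hy.mul_left _),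
    Summable.tsum_sub (hS.mul_left _) hx, tsum_mul_left, tsum_mul_left] at h
  have hX : 0 ≤ ∑' i, w i * ‖x i‖ ^ 2 := tsum_nonneg fun i => mul_nonneg (hw i) (sq_nonneg _)
  have hY : 0 ≤ ∑' i, w i * ‖y i‖ ^ 2 := tsum_nonneg fun i => mul_nonneg (hw i) (sq_nonneg _)
  generalize (∑' i, w i * ‖x i‖ ^ 2) = X at *
  generalize (∑' i, w i * ‖y i‖ ^ 2) = Y at *
  generalize (∑' i, w i * re (x i * conj (y i))) = S at *
  have hmM : 0 < m * M := mul_pos hm hM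
  have hc : 0 < Real.sqrt (m * M) := Real.sqrt_pos.2 hmM
  have e : 1 / 2 * ((M + m) / Real.sqrt (m * M)) * S
      = ((M + m) * S / 2) / Real.sqrt (m * M) := by ring
  rw [e, le_div_iff₀ hc, ← Real.sqrt_mul (mul_nonneg hX hY)]
  have h2 : 0 ≤ m * M * Y := mul_nonneg hmM.le hY
  apply Real.sqrt_le_iff.2
  constructor
  · linarith
  · nlinarith [sq_nonneg (X - m * M * Y),
      mul_self_le_mul_self (add_nonneg hX h2) (show X + m * M * Y ≤ (M + m) * S by linarith)]
end

section
/- Let w : ℕ → ℝ be a sequence of nonnegative reals, 𝕜 = ℝ or ℂ, and m, M > 0 real numbers. Let x, y : ℕ → 𝕜 be such that Σᵢ wᵢ·|xᵢ|² and Σᵢ wᵢ·|yᵢ|² are finite (summable). If Σᵢ wᵢ·Re[(M·yᵢ − xᵢ)·(conj(xᵢ) − m·conj(yᵢ))] ≥ 0, then both: (i) 0 ≤ (Σᵢ wᵢ·|xᵢ|² · Σᵢ wᵢ·|yᵢ|²)^(1/2) − Σᵢ wᵢ·Re(xᵢ·conj(yᵢ)) ≤ (√M − √m)²/(2√(m·M))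 · Σᵢ wᵢ·Re(xᵢ·conj(yᵢ)), and (ii) 0 ≤ (Σᵢ wᵢ·|xᵢ|²)·(Σᵢ wᵢ·|yᵢ|²) − (Σᵢ wᵢ·Re(xᵢ·conj(yᵢ)))² ≤ (M − m)²/(4·m·M) · (Σᵢ wᵢ·Re(xᵢ·conj(yᵢ)))². -/
theorem aux_real (m M A B C : ℝ) (hm : 0 < m) (hM : 0 < M) (hA : 0 ≤ A) (hB : 0 ≤ B)
    (hCS : C ^ 2 ≤ A * B) (h : A + m * M * B ≤ (M + m) * C) :
    (0 ≤ Real.sqrt (A * B) - C ∧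
      Real.sqrt (A * B) - C ≤ (Real.sqrt M - Real.sqrt m) ^ 2 / (2 * Real.sqrt (m * M)) * C) ∧
    (0 ≤ A * B - C ^ 2 ∧ A * B - C ^ 2 ≤ (M - m) ^ 2 / (4 * m * M) * C ^ 2) := by
  have hmM : 0 < m * M := mul_pos hm hM
  have hC : 0 ≤ C := by
    by_contra hneg
    push Not at hneg
    nlinarith [mul_nonneg hmM.le hB, mul_pos (add_pos hM hm) (neg_pos.mpr hneg)]
  have key : 4 * (m * M) * (A * B) ≤ ((M + m) * C) ^ 2 := by
    have h0 : 0 ≤ A + m * M * B := add_nonneg hA (mul_nonneg hmM.le hB)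
    have h1 : (A + m * M * B) ^ 2 ≤ ((M + m) * C) ^ 2 := pow_le_pow_left₀ h0 h 2
    nlinarith [sq_nonneg (A - m * M * B)]
  refine ⟨⟨?_, ?_⟩, ?_, ?_⟩
  · have := Real.le_sqrt_of_sq_le hCS
    linarith
  · have hs : Real.sqrt (m * M) = Real.sqrt m * Real.sqrt M := Real.sqrt_mul hm.le M
    have hq := Real.sqrt_pos.mpr hm
    have hp := Real.sqrt_pos.mpr hM
    have hq2 := Real.sq_sqrt hm.le
    have hp2 := Real.sq_sqrt hM.le
    rw [hs]
    generalize Real.sqrt m = q at *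
    generalize Real.sqrt M = p at *
    have h2 : Real.sqrt (A * B) ≤ (p ^ 2 + q ^ 2) * C / (2 * (q * p)) := by
      apply Real.sqrt_le_iff.mpr
      refine ⟨by positivity, ?_⟩
      rw [div_pow, le_div_iff₀ (by positivity)]
      rw [hp2, hq2]
      have : (2 * (q * p)) ^ 2 = 4 * (m * M) := by rw [← hp2, ← hq2]; ring
      rw [this]; linarith
    have h3 : (p ^ 2 + q ^ 2) * C / (2 * (q * p)) = (p - q) ^ 2 / (2 * (q * p)) * C + C := by
      field_simp
      ring
    linarith
  · linarith
  · rw [div_mul_eq_mul_div, le_div_iff₀ (by positivity)]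
    nlinarith

open RCLike ComplexConjugate

/-- Corollary 5.6, inequalities (5.9) and (5.10). -/
theorem weighted_sequence_cassels_additive {𝕜 : Type*} [RCLike 𝕜]
    (w : ℕ → ℝ) (hw : ∀ i, 0 ≤ w i) (m M : ℝ) (hm : 0 < m) (hM : 0 < M)
    (x y : ℕ → 𝕜)
    (hx : Summable fun i => w i * ‖x i‖ ^ 2) (hy : Summable fun i => w i * ‖y i‖ ^ 2)
    (h : 0 ≤ ∑' i, w i * re (((M : 𝕜) * y i - x i) * (conj (x i) - (m : 𝕜) * conj (y i)))) :
    (0 ≤ Real.sqrt ((∑' i, w i * ‖x i‖ ^ 2) * (∑' i, w i * ‖y i‖ ^ 2)) -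
          ∑' i, w i * re (x i * conj (y i)) ∧
        Real.sqrt ((∑' i, w i * ‖x i‖ ^ 2) * (∑' i, w i * ‖y i‖ ^ 2)) -
            (∑' i, w i * re (x i * conj (y i))) ≤
          (Real.sqrt M - Real.sqrt m) ^ 2 / (2 * Real.sqrt (m * M)) *
            ∑' i, w i * re (x i * conj (y i))) ∧
      (0 ≤ (∑' i, w i * ‖x i‖ ^ 2) * (∑' i, w i * ‖y i‖ ^ 2) -
            (∑' i, w i * re (x i * conj (y i))) ^ 2 ∧
        (∑' i, w i * ‖x i‖ ^ 2) * (∑' i, w i * ‖y i‖ ^ 2) -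
            (∑' i, w i * re (x i * conj (y i))) ^ 2 ≤
          (M - m) ^ 2 / (4 * m * M) * (∑' i, w i * re (x i * conj (y i))) ^ 2) := by
  have e1 : ∀ i, w i * ‖x i‖ ^ 2 = w i * (re (x i) ^ 2 + im (x i) ^ 2) := fun i => by
    rw [← RCLike.normSq_eq_def', RCLike.normSq_apply]; ring
  have e2 : ∀ i, w i * ‖y i‖ ^ 2 = w i * (re (y i) ^ 2 + im (y i) ^ 2) := fun i => by
    rw [← RCLike.normSq_eq_def', RCLike.normSq_apply]; ring
  have e3 : ∀ i, re (x i * conj (y i)) = re (x i) * re (y i) + im (x i) * im (y i) := fun i => by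
    simp [RCLike.mul_re]
  have hz : Summable fun i => w i * re (x i * conj (y i)) := by
    refine Summable.of_norm_bounded (hx.add hy) fun i => ?_
    rw [e1, e2, e3, Real.norm_eq_abs, abs_mul, abs_of_nonneg (hw i), ← mul_add]
    refine mul_le_mul_of_nonneg_left ?_ (hw i)
    rw [abs_le]
    constructor <;> nlinarith [sq_nonneg (re (x i) + re (y i)), sq_nonneg (re (x i) - re (y i)),
      sq_nonneg (im (x i) + im (y i)), sq_nonneg (im (x i) - im (y i)), sq_nonneg (re (x i)),
      sq_nonneg (re (y i)), sq_nonneg (im (x i)), sq_nonneg (im (y i))]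
  have hlin : ∀ a b c : ℝ, ∑' i, (a * (w i * ‖x i‖ ^ 2) + b * (w i * ‖y i‖ ^ 2)
      + c * (w i * re (x i * conj (y i)))) = a * (∑' i, w i * ‖x i‖ ^ 2)
        + b * (∑' i, w i * ‖y i‖ ^ 2) + c * ∑' i, w i * re (x i * conj (y i)) := fun a b c =>
    (((hx.hasSum.mul_left a).add (hy.hasSum.mul_left b)).add (hz.hasSum.mul_left c)).tsum_eq
  have hA : 0 ≤ ∑' i, w i * ‖x i‖ ^ 2 := tsum_nonneg fun i => mul_nonneg (hw i) (sq_nonneg _)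
  have hB : 0 ≤ ∑' i, w i * ‖y i‖ ^ 2 := tsum_nonneg fun i => mul_nonneg (hw i) (sq_nonneg _)
  refine aux_real m M _ _ _ hm hM hA hB ?_ ?_
  · have hq : ∀ t : ℝ, 0 ≤ (∑' i, w i * ‖y i‖ ^ 2) * (t * t)
        + (-2 * ∑' i, w i * re (x i * conj (y i))) * t + ∑' i, w i * ‖x i‖ ^ 2 := fun t => by
      have h1 := hlin 1 (t * t) (-2 * t)
      have h2 : 0 ≤ ∑' i, (1 * (w i * ‖x i‖ ^ 2) + (t * t) * (w i * ‖y i‖ ^ 2)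
          + (-2 * t) * (w i * re (x i * conj (y i)))) := by
        refine tsum_nonneg fun i => ?_
        rw [e1, e2, e3]
        have := mul_nonneg (hw i) (add_nonneg (sq_nonneg (re (x i) - t * re (y i)))
          (sq_nonneg (im (x i) - t * im (y i))))
        linarith
      rw [h1] at h2
      linarith
    have := discrim_le_zero hq
    rw [discrim] at this
    linarith
  · have h1 := hlin (-1) (-(m * M)) (M + m)
    have h2 : ∀ i, w i * re (((M : 𝕜) * y i - x i) * (conj (x i) - (m : 𝕜) * conj (y i))) =
        -1 * (w i * ‖x i‖ ^ 2) + -(m * M) * (w i * ‖y i‖ ^ 2)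
          + (M + m) * (w i * re (x i * conj (y i))) := fun i => by
      rw [e1, e2, e3]
      simp [RCLike.mul_re, RCLike.mul_im]
      ring
    rw [tsum_congr h2, h1] at h
    linarith
end
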